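/- Let g ≥ 1 and let G be a finitely generated group admitting a surjective group homomorphism ρ : G → Sp(2g,ℤ) onto the integral symplectic group. Then G has uniformly exponential growth, i.e., ω(G) > 1. -/

import Mathlib

open Matrix
/-- The matrix of the standard symplectic form
`q(x,y) = x₁y₂ - x₂y₁ + ⋯ + x_{2g-1}y_{2g} - x_{2g}y_{2g-1}` on `ℤ^{2g}`. -/
def stdSymplecticJ (g : ℕ) : Matrix (Fin (2 * g)) (Fin (2 * g)) ℤ :=
  Matrix.of fun i j =>
    if (i : ℕ) % 2 = 0 ∧ (j : ℕ) = (i : ℕ) + 1 then 1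
    else if (j : ℕ) % 2 = 0 ∧ (i : ℕ) = (j : ℕ) + 1 then -1
    else 0

/-- `Sp(2g,ℤ)`: the group of `2g × 2g` integer matrices preserving the standard
non-degenerate skew-symmetric bilinear form on `ℤ^{2g}`. -/
def Sp (g : ℕ) : Subgroup (GL (Fin (2 * g)) ℤ) where
  carrier := {M | (M : Matrix (Fin (2 * g)) (Fin (2 * g)) ℤ) * stdSymplecticJ g *
      (M : Matrix (Fin (2 * g)) (Fin (2 * g)) ℤ)ᵀ = stdSymplecticJ g}
  one_mem' := by
    simp [Units.val_one]
  mul_mem' := by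
    intro a b ha hb
    simp only [Set.mem_setOf_eq] at *
    have : (a : Matrix (Fin (2 * g)) (Fin (2 * g)) ℤ) *
        ((b : Matrix (Fin (2 * g)) (Fin (2 * g)) ℤ) * stdSymplecticJ g *
          (b : Matrix (Fin (2 * g)) (Fin (2 * g)) ℤ)ᵀ) *
        (a : Matrix (Fin (2 * g)) (Fin (2 * g)) ℤ)ᵀ = stdSymplecticJ g := by
      rw [hb, ha]
    rw [Units.val_mul, Matrix.transpose_mul]
    calc (a : Matrix (Fin (2 * g)) (Fin (2 * g)) ℤ) * b * stdSymplecticJ g *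
          ((b : Matrix (Fin (2 * g)) (Fin (2 * g)) ℤ)ᵀ *
            (a : Matrix (Fin (2 * g)) (Fin (2 * g)) ℤ)ᵀ)
        = (a : Matrix (Fin (2 * g)) (Fin (2 * g)) ℤ) *
            ((b : Matrix (Fin (2 * g)) (Fin (2 * g)) ℤ) * stdSymplecticJ g *
              (b : Matrix (Fin (2 * g)) (Fin (2 * g)) ℤ)ᵀ) *
            (a : Matrix (Fin (2 * g)) (Fin (2 * g)) ℤ)ᵀ := by noncomm_ring
      _ = stdSymplecticJ g := this
  inv_mem' := by
    intro M h
    simp only [Set.mem_setOf_eq] at *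
    have hd : IsUnit (M : Matrix (Fin (2 * g)) (Fin (2 * g)) ℤ).det :=
      (Matrix.isUnit_iff_isUnit_det _).mp M.isUnit
    have hdt : IsUnit ((M : Matrix (Fin (2 * g)) (Fin (2 * g)) ℤ)ᵀ).det := by
      rwa [Matrix.det_transpose]
    rw [Matrix.coe_units_inv, Matrix.transpose_nonsing_inv]
    calc (M : Matrix (Fin (2 * g)) (Fin (2 * g)) ℤ)⁻¹ * stdSymplecticJ g *
          ((M : Matrix (Fin (2 * g)) (Fin (2 * g)) ℤ)ᵀ)⁻¹
        = (M : Matrix (Fin (2 * g)) (Fin (2 * g)) ℤ)⁻¹ *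
            ((M : Matrix (Fin (2 * g)) (Fin (2 * g)) ℤ) * stdSymplecticJ g *
              (M : Matrix (Fin (2 * g)) (Fin (2 * g)) ℤ)ᵀ) *
            ((M : Matrix (Fin (2 * g)) (Fin (2 * g)) ℤ)ᵀ)⁻¹ := by rw [h]
      _ = ((M : Matrix (Fin (2 * g)) (Fin (2 * g)) ℤ)⁻¹ *
            (M : Matrix (Fin (2 * g)) (Fin (2 * g)) ℤ)) * stdSymplecticJ g *
            ((M : Matrix (Fin (2 * g)) (Fin (2 * g)) ℤ)ᵀ *
              ((M : Matrix (Fin (2 * g)) (Fin (2 * g)) ℤ)ᵀ)⁻¹) := by noncomm_ring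
      _ = stdSymplecticJ g := by
          rw [Matrix.nonsing_inv_mul _ hd, Matrix.mul_nonsing_inv _ hdt, one_mul, mul_one]

open Filter

variable {G : Type*} [Group G]

noncomputable def wordLength (S : Set G) (g : G) : ℕ :=
  sInf {k | ∃ w : List G, w.length = k ∧ (∀ x ∈ w, x ∈ S ∨ x⁻¹ ∈ S) ∧ w.prod = g}

noncomputable def ballCard (S : Set G) (n : ℕ) : ℕ :=
  Set.ncard {g : G | wordLength S g ≤ n}

noncomputable def growthRate (S : Set G) : ℝ :=
  limUnder atTop (fun n : ℕ => (ballCard S n : ℝ) ^ ((n : ℝ)⁻¹))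

noncomputable def minGrowth (G : Type*) [Group G] : ℝ :=
  sInf {x : ℝ | ∃ S : Finset G, Subgroup.closure (S : Set G) = ⊤ ∧ growthRate (S : Set G) = x}

namespace UG

/-- Words of length at most `n`. -/
def WB {G : Type*} [Group G] (S : Set G) (n : ℕ) : Set G :=
  {g | ∃ w : List G, w.length ≤ n ∧ (∀ x ∈ w, x ∈ S ∨ x⁻¹ ∈ S) ∧ w.prod = g}

section growth
variable {G : Type*} [Group G] {S : Set G}

lemma WB_mono {m n : ℕ} (h : m ≤ n) : WB S m ⊆ WB S n := by
  rintro g ⟨w, h1, h2, h3⟩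
  exact ⟨w, h1.trans h, h2, h3⟩

lemma one_mem_WB (n : ℕ) : (1 : G) ∈ WB S n := ⟨[], by simp, by simp, by simp⟩

lemma mul_mem_WB {m n : ℕ} {a b : G} (ha : a ∈ WB S m) (hb : b ∈ WB S n) :
    a * b ∈ WB S (m + n) := by
  obtain ⟨w, h1, h2, rfl⟩ := ha
  obtain ⟨w', h1', h2', rfl⟩ := hb
  refine ⟨w ++ w', by simp; omega, ?_, by simp⟩
  intro x hx
  rcases List.mem_append.1 hx with h | h
  · exact h2 x h
  · exact h2' x h

lemma pow_mem_WB {m : ℕ} {a : G} (ha : a ∈ WB S m) (j : ℕ) : a ^ j ∈ WB S (j * m) := by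
  induction j with
  | zero => simpa using one_mem_WB 0
  | succ j ih =>
    rw [pow_succ, Nat.succ_mul]
    exact mul_mem_WB ih ha

lemma inv_mem_WB {m : ℕ} {a : G} (ha : a ∈ WB S m) : a⁻¹ ∈ WB S m := by
  obtain ⟨w, h1, h2, rfl⟩ := ha
  refine ⟨(w.map (·⁻¹)).reverse, by simpa using h1, ?_, by rw [List.prod_inv_reverse]⟩
  intro x hx
  simp only [List.mem_reverse, List.mem_map] at hx
  obtain ⟨y, hy, rfl⟩ := hx
  rw [inv_inv]
  exact (h2 y hy).symm

lemma WB_split {m n : ℕ} {g : G} (hg : g ∈ WB S (m + n)) :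
    ∃ a ∈ WB S m, ∃ b ∈ WB S n, a * b = g := by
  obtain ⟨w, h1, h2, rfl⟩ := hg
  refine ⟨(w.take m).prod, ⟨_, by simp, fun x hx => h2 x (List.mem_of_mem_take hx), rfl⟩,
    (w.drop m).prod, ⟨_, by simp; omega, fun x hx => h2 x (List.mem_of_mem_drop hx), rfl⟩, ?_⟩
  rw [← List.prod_append, List.take_append_drop]

lemma WB_zero : WB S 0 = {1} := by
  ext g
  constructor
  · rintro ⟨w, h1, -, rfl⟩
    have : w = [] := by simpa using h1
    simp [this]
  · rintro rfl
    exact one_mem_WB 0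

lemma WB_one : WB S 1 = {1} ∪ {x | x ∈ S ∨ x⁻¹ ∈ S} := by
  ext g
  constructor
  · rintro ⟨w, h1, h2, rfl⟩
    match w, h1 with
    | [], _ => simp
    | [x], _ => right; simpa using h2
  · rintro (h | h)
    · rw [h]; exact one_mem_WB 1
    · exact ⟨[g], by simp, by simpa using h, by simp⟩

lemma WB_finite (hS : S.Finite) (n : ℕ) : (WB S n).Finite := by
  induction n with
  | zero => rw [WB_zero]; exact Set.finite_singleton 1
  | succ n ih =>
    have h1 : (WB S 1).Finite := by
      rw [WB_one]
      refine (Set.finite_singleton _).union (hS.union ?_)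
      exact (hS.inv)
    refine (Set.Finite.image2 (fun a b => a * b) ih h1).subset ?_
    intro g hg
    obtain ⟨a, ha, b, hb, rfl⟩ := WB_split hg
    exact ⟨a, ha, b, hb, rfl⟩

lemma exists_word (hS : Subgroup.closure S = ⊤) (g : G) :
    ∃ n, g ∈ WB S n := by
  have hg : g ∈ Subgroup.closure S := by rw [hS]; trivial
  induction hg using Subgroup.closure_induction with
  | mem x hx => exact ⟨1, [x], by simp, by simp [hx], by simp⟩
  | one => exact ⟨0, one_mem_WB 0⟩
  | mul x y _ _ h1 h2 =>
    obtain ⟨m, hm⟩ := h1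
    obtain ⟨n, hn⟩ := h2
    exact ⟨m + n, mul_mem_WB hm hn⟩
  | inv x _ h =>
    obtain ⟨m, hm⟩ := h
    exact ⟨m, inv_mem_WB hm⟩

lemma ball_eq (hS : Subgroup.closure S = ⊤) (n : ℕ) : {g : G | wordLength S g ≤ n} = WB S n := by
  ext g
  constructor
  · intro h
    obtain ⟨m, w, h1, h2, h3⟩ := exists_word hS g
    have hne : {k | ∃ w : List G, w.length = k ∧ (∀ x ∈ w, x ∈ S ∨ x⁻¹ ∈ S) ∧ w.prod = g}.Nonempty :=
      ⟨w.length, w, rfl, h2, h3⟩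
    obtain ⟨w', h1', h2', h3'⟩ := Nat.sInf_mem hne
    exact ⟨w', by rw [h1']; exact h, h2', h3'⟩
  · rintro ⟨w, h1, h2, h3⟩
    have hm : w.length ∈ {k | ∃ w : List G, w.length = k ∧ (∀ x ∈ w, x ∈ S ∨ x⁻¹ ∈ S) ∧ w.prod = g} :=
      ⟨w, rfl, h2, h3⟩
    exact (Nat.sInf_le hm).trans h1

lemma ballCard_eq (hS : Subgroup.closure S = ⊤) (n : ℕ) : ballCard S n = (WB S n).ncard := by
  rw [ballCard, ball_eq hS]

lemma ncard_WB_pos (hf : S.Finite) (n : ℕ) : 1 ≤ (WB S n).ncard :=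
  (Set.ncard_pos (WB_finite hf n)).2 ⟨1, one_mem_WB n⟩

lemma ncard_WB_add (hf : S.Finite) (m n : ℕ) :
    (WB S (m + n)).ncard ≤ (WB S m).ncard * (WB S n).ncard := by
  rw [← Set.ncard_prod]
  have hfin : (WB S m ×ˢ WB S n).Finite := (WB_finite hf m).prod (WB_finite hf n)
  refine le_trans (Set.ncard_le_ncard ?_ (hfin.image fun p : G × G => p.1 * p.2))
    (Set.ncard_image_le hfin)
  intro g hg
  obtain ⟨a, ha, b, hb, rfl⟩ := WB_split hg
  exact ⟨(a, b), ⟨ha, hb⟩, rfl⟩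

/-- The growth rate exists, and a lower bound on the ball sizes bounds it below. -/
lemma growthRate_ge (hS : Subgroup.closure S = ⊤) (hf : S.Finite) (C : ℕ) (hC : 1 ≤ C)
    (h : ∀ n, 2 * (WB S n).ncard ≤ (WB S (n + C)).ncard) :
    (2 : ℝ) ^ ((C : ℝ)⁻¹) ≤ growthRate S := by
  set u : ℕ → ℝ := fun n => Real.log ((WB S n).ncard : ℝ) with hu
  have hpos : ∀ n, (1 : ℝ) ≤ ((WB S n).ncard : ℝ) := fun n => by
    exact_mod_cast ncard_WB_pos hf n
  have hsub : Subadditive u := by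
    intro m n
    simp only [hu]
    rw [← Real.log_mul (by linarith [hpos m]) (by linarith [hpos n])]
    apply Real.log_le_log (by linarith [hpos (m + n)])
    exact_mod_cast ncard_WB_add hf m n
  have hbdd : BddBelow (Set.range fun n => u n / n) := by
    refine ⟨0, ?_⟩
    rintro _ ⟨n, rfl⟩
    exact div_nonneg (Real.log_nonneg (hpos n)) (Nat.cast_nonneg n)
  have ht := hsub.tendsto_lim hbdd
  have ht2 : Tendsto (fun n : ℕ => (ballCard S n : ℝ) ^ ((n : ℝ)⁻¹)) atTop
      (nhds (Real.exp hsub.lim)) := by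
    have := (Real.continuous_exp.tendsto _).comp ht
    refine this.congr ?_
    intro n
    simp only [Function.comp]
    rw [ballCard_eq hS, Real.rpow_def_of_pos (by linarith [hpos n]), div_eq_mul_inv]
  have hlim : growthRate S = Real.exp hsub.lim := ht2.limUnder_eq
  have hpow : ∀ t : ℕ, (2 : ℝ) ^ t ≤ ((WB S (t * C)).ncard : ℝ) := by
    intro t
    induction t with
    | zero => simpa using hpos 0
    | succ t ih =>
      have := h (t * C)
      have h2 : (2 : ℝ) * ((WB S (t * C)).ncard : ℝ) ≤ ((WB S (t * C + C)).ncard : ℝ) := by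
        exact_mod_cast this
      rw [Nat.succ_mul, pow_succ]
      linarith
  have hlb : Real.log 2 * (C : ℝ)⁻¹ ≤ hsub.lim := by
    have htt : Tendsto (fun t : ℕ => t * C) atTop atTop :=
      tendsto_id.atTop_mul_const' (by omega : 0 < C)
    have h3 := ht.comp htt
    refine ge_of_tendsto h3 ?_
    filter_upwards [eventually_ge_atTop 1] with t ht1
    simp only [Function.comp, hu]
    have htC : (0 : ℝ) < ((t * C : ℕ) : ℝ) := by
      exact_mod_cast Nat.mul_pos ht1 hC
    rw [le_div_iff₀ htC]
    have h4 := Real.log_le_log (by positivity) (hpow t)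
    rw [Real.log_pow] at h4
    have hC' : (C : ℝ) ≠ 0 := by positivity
    calc Real.log 2 * (C : ℝ)⁻¹ * ((t * C : ℕ) : ℝ) = t * Real.log 2 := by
          push_cast; field_simp
      _ ≤ _ := h4
  rw [hlim, Real.rpow_def_of_pos (by norm_num)]
  exact Real.exp_le_exp.2 hlb

/-- Paradoxical decomposition gives doubling. -/
lemma doubling {I : Type*} [Fintype I] (hf : S.Finite) (k c : ℕ) (w : I → G) (b : G) (A : Set G)
    (hw : ∀ i, w i ∈ WB S k) (hb : b ∈ WB S c) (hcov : ∀ x, ∃ i, w i * x ∈ A)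
    (hdis : ∀ j : ℕ, 1 ≤ j → ∀ x ∈ A, b ^ j * x ∉ A) (n : ℕ) :
    2 * (WB S n).ncard ≤ (WB S (n + (k + 2 * Fintype.card I * c))).ncard := by
  classical
  set L := Fintype.card I with hL
  set A' : Set G := A ∩ WB S (k + n) with hA'
  have hA'f : A'.Finite := (WB_finite hf _).inter_of_right _
  -- covering
  have h1 : (WB S n).ncard ≤ L * A'.ncard := by
    have hsub : WB S n ⊆ (fun p : I × G => (w p.1)⁻¹ * p.2) '' ((Set.univ : Set I) ×ˢ A') := by
      intro x hx
      obtain ⟨i, hi⟩ := hcov x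
      exact ⟨(i, w i * x), ⟨trivial, hi, mul_mem_WB (hw i) hx⟩, by simp⟩
    have hfin : ((Set.univ : Set I) ×ˢ A').Finite := Set.finite_univ.prod hA'f
    calc (WB S n).ncard ≤ _ := Set.ncard_le_ncard hsub (hfin.image _)
      _ ≤ _ := Set.ncard_image_le hfin
      _ = _ := by rw [Set.ncard_prod, Set.ncard_univ, Nat.card_eq_fintype_card]
  -- packing
  have h2 : (2 * L) * A'.ncard ≤ (WB S (n + (k + 2 * L * c))).ncard := by
    have hinj : Set.InjOn (fun p : Fin (2 * L) × G => b ^ (p.1 : ℕ) * p.2)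
        ((Set.univ : Set (Fin (2 * L))) ×ˢ A') := by
      have key : ∀ (i j : ℕ) (x y : G), x ∈ A → y ∈ A → i < j → b ^ i * x = b ^ j * y → False := by
        intro i j x y hx hy hij h
        apply hdis (j - i) (by omega) y hy
        have : b ^ j = b ^ i * b ^ (j - i) := by rw [← pow_add]; congr 1; omega
        rw [this, mul_assoc] at h
        rw [← mul_left_cancel h]
        exact hx
      rintro ⟨i, x⟩ ⟨-, hx⟩ ⟨j, y⟩ ⟨-, hy⟩ h
      simp only at h hx hy
      rcases lt_trichotomy (i : ℕ) (j : ℕ) with hij | hij | hij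
      · exact (key _ _ _ _ hx.1 hy.1 hij h).elim
      · have : i = j := Fin.ext hij
        subst this
        rw [mul_left_cancel h]
      · exact (key _ _ _ _ hy.1 hx.1 hij h.symm).elim
    calc (2 * L) * A'.ncard = ((Set.univ : Set (Fin (2 * L))) ×ˢ A').ncard := by
          rw [Set.ncard_prod, Set.ncard_univ, Nat.card_eq_fintype_card, Fintype.card_fin]
      _ = _ := hinj.ncard_image.symm
      _ ≤ _ := by
        apply Set.ncard_le_ncard _ (WB_finite hf _)
        rintro _ ⟨⟨i, x⟩, ⟨-, hx⟩, rfl⟩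
        have := mul_mem_WB (pow_mem_WB hb (i : ℕ)) hx.2
        refine WB_mono ?_ this
        have : (i : ℕ) * c ≤ 2 * L * c := Nat.mul_le_mul_right _ i.2.le
        omega
  calc 2 * (WB S n).ncard ≤ 2 * (L * A'.ncard) := by omega
    _ = (2 * L) * A'.ncard := by ring
    _ ≤ _ := h2

/-- Every class of a finite quotient is represented by a short word. -/
lemma exists_short {Q : Type*} [Group Q] [Fintype Q] (hS : Subgroup.closure S = ⊤) (π : G →* Q)
    (x : G) : ∃ y ∈ WB S (Fintype.card Q), π y = π x := by
  classical
  have hex : ∃ n, ∃ y ∈ WB S n, π y = π x := by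
    obtain ⟨n, hn⟩ := exists_word hS x
    exact ⟨n, x, hn, rfl⟩
  obtain ⟨y, ⟨w, h1, h2, rfl⟩, hyx⟩ := Nat.find_spec hex
  have hmin : Nat.find hex ≤ Fintype.card Q := by
    by_contra hlt
    push Not at hlt
    set n := Nat.find hex with hn
    have hlen : w.length = n := by
      refine le_antisymm h1 ?_
      exact Nat.find_min' hex ⟨w.prod, ⟨w, le_rfl, h2, rfl⟩, hyx⟩
    obtain ⟨i, j, hij, heq⟩ := Fintype.exists_ne_map_eq_of_card_lt
      (fun i : Fin (n) => π (w.take i).prod) (by simpa using hlt)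
    wlog hlt' : (i : ℕ) < j generalizing i j
    · exact this j i hij.symm heq.symm (by
        rcases lt_trichotomy (i : ℕ) (j : ℕ) with h | h | h
        · exact absurd h hlt'
        · exact absurd (Fin.ext h) hij
        · exact h)
    have : n ≤ (w.take i ++ w.drop j).length := by
      refine Nat.find_min' hex ⟨(w.take i ++ w.drop j).prod, ⟨_, le_rfl, ?_, rfl⟩, ?_⟩
      · intro z hz
        rcases List.mem_append.1 hz with h | h
        · exact h2 z (List.mem_of_mem_take h)
        · exact h2 z (List.mem_of_mem_drop h)
      · rw [List.prod_append, map_mul, heq, ← map_mul, ← List.prod_append, List.take_append_drop, hyx]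
    have hj := j.2
    simp at this
    omega
  exact ⟨w.prod, WB_mono hmin ⟨w, h1, h2, rfl⟩, hyx⟩

end growth
end UG

namespace UG
section core
open Matrix
set_option linter.unusedSectionVars false

variable {ι : Type*} [Fintype ι] [DecidableEq ι]

/-- Complexification of an integer matrix. -/
noncomputable def cx (M : Matrix ι ι ℤ) : Matrix ι ι ℂ := M.map (Int.castRingHom ℂ)

lemma cx_mul (M N : Matrix ι ι ℤ) : cx (M * N) = cx M * cx N := by
  unfold cx; exact Matrix.map_mul

lemma cx_one : cx (1 : Matrix ι ι ℤ) = 1 := by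
  unfold cx; exact Matrix.map_one _ (map_zero _) (map_one _)

lemma cx_trace (M : Matrix ι ι ℤ) : (cx M).trace = (M.trace : ℂ) := by
  unfold cx; simp [Matrix.trace]

lemma cx_det (M : Matrix ι ι ℤ) : (cx M).det = (M.det : ℂ) := by
  unfold cx
  have := (RingHom.map_det (Int.castRingHom ℂ) M).symm
  simpa using this

/-- The `κ × κ` matrix with rows the given matrices. -/
def rowsMat {R : Type*} (f : ι × ι → Matrix ι ι R) : Matrix (ι × ι) (ι × ι) R :=
  Matrix.of fun j p => f j p.1 p.2

/-- The constant of the expansion lemma. -/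
noncomputable def DD (N : ℕ) (B : ℝ) : ℝ := N * (N.factorial * B ^ N)

lemma adj_bound {κ : Type*} [Fintype κ] [DecidableEq κ] (T : Matrix κ κ ℂ) (B : ℝ) (hB1 : 1 ≤ B)
    (hT : ∀ i j, ‖T i j‖ ≤ B) (i j : κ) :
    ‖T.adjugate i j‖ ≤ (Fintype.card κ).factorial * B ^ Fintype.card κ := by
  rw [Matrix.adjugate_apply]
  have := Matrix.det_le (A := T.updateRow j (Pi.single i 1)) (abv := NormedField.toAbsoluteValue ℂ)
    (x := B) (by
      intro a b
      change ‖T.updateRow j (Pi.single i 1) a b‖ ≤ B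
      rw [Matrix.updateRow_apply]
      split_ifs
      · rw [Pi.single_apply]
        split_ifs
        · simpa using hB1
        · simp; linarith
      · exact hT a b)
  rw [nsmul_eq_mul] at this
  exact this

lemma expand (f : ι × ι → Matrix ι ι ℤ) (B : ℝ) (hB1 : 1 ≤ B)
    (hB : ∀ j k, ‖(cx (f j) * cx (f k)).trace‖ ≤ B) (hdet : (rowsMat f).det ≠ 0)
    (X : Matrix ι ι ℂ) :
    ∃ c : ι × ι → ℂ, X = ∑ j, c j • cx (f j) ∧
      ∀ t : ℝ, (∀ k, ‖(cx (f k) * X).trace‖ ≤ t) → ∀ j,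
        ‖c j‖ ≤ DD (Fintype.card (ι × ι)) B * t := by
  set Am : Matrix (ι × ι) (ι × ι) ℤ := rowsMat f with hAm
  set TZ : Matrix (ι × ι) (ι × ι) ℤ := Am.submatrix id (Equiv.prodComm ι ι) * Amᵀ with hTZ
  have hTZdet : TZ.det ≠ 0 := by
    rw [hTZ, Matrix.det_mul, Matrix.det_transpose, Matrix.det_permute']
    refine mul_ne_zero (mul_ne_zero ?_ hdet) hdet
    simp
  set Ac : Matrix (ι × ι) (ι × ι) ℂ := Am.map (Int.castRingHom ℂ) with hAc
  have hAcdet : IsUnit (Acᵀ).det := by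
    rw [Matrix.det_transpose, hAc, isUnit_iff_ne_zero]
    have := (RingHom.map_det (Int.castRingHom ℂ) Am).symm
    rw [RingHom.mapMatrix_apply] at this
    rw [this]
    simpa using hdet
  set T : Matrix (ι × ι) (ι × ι) ℂ := TZ.map (Int.castRingHom ℂ) with hT
  have hTdet : 1 ≤ ‖T.det‖ := by
    have := (RingHom.map_det (Int.castRingHom ℂ) TZ).symm
    rw [RingHom.mapMatrix_apply] at this
    rw [hT, this, eq_intCast, Complex.norm_intCast]
    have h := Int.one_le_abs hTZdet
    exact_mod_cast h
  have hTentry : ∀ k j, T k j = (cx (f k) * cx (f j)).trace := by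
    intro k j
    rw [← cx_mul, cx_trace]
    simp only [hT, Matrix.map_apply, eq_intCast]
    congr 1
    simp only [hTZ, Matrix.mul_apply, Matrix.trace, Matrix.diag, Matrix.submatrix_apply, hAm, rowsMat,
      Matrix.transpose_apply, Matrix.of_apply, id, Fintype.sum_prod_type, Equiv.prodComm_apply,
      Prod.swap]
    rw [Finset.sum_comm]
  set vX : ι × ι → ℂ := fun p => X p.1 p.2 with hvX
  set c : ι × ι → ℂ := (Acᵀ)⁻¹ *ᵥ vX with hc
  have hAc_c : Acᵀ *ᵥ c = vX := by
    rw [hc, Matrix.mulVec_mulVec, Matrix.mul_nonsing_inv _ hAcdet, Matrix.one_mulVec]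
  have hX : X = ∑ j, c j • cx (f j) := by
    ext a b
    have := congrFun hAc_c (a, b)
    simp only [Matrix.mulVec, dotProduct, Matrix.transpose_apply, hvX] at this
    rw [Matrix.sum_apply, ← this]
    refine Finset.sum_congr rfl fun j _ => ?_
    simp [hAc, hAm, rowsMat, cx, mul_comm]
  refine ⟨c, hX, fun t ht j => ?_⟩
  set τ : ι × ι → ℂ := fun k => (cx (f k) * X).trace with hτ
  have hTc : T *ᵥ c = τ := by
    ext k
    simp only [Matrix.mulVec, dotProduct, hTentry, hτ]
    conv_rhs => rw [hX]
    rw [Matrix.mul_sum, Matrix.trace_sum]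
    refine Finset.sum_congr rfl fun j _ => ?_
    rw [Matrix.mul_smul, Matrix.trace_smul, smul_eq_mul, mul_comm]
  have hadj : T.det • c = T.adjugate *ᵥ τ := by
    rw [← hTc, Matrix.mulVec_mulVec, Matrix.adjugate_mul, Matrix.smul_mulVec, Matrix.one_mulVec]
  have ht0 : 0 ≤ t := (norm_nonneg _).trans (ht j)
  have hj := congrFun hadj j
  simp only [Pi.smul_apply, smul_eq_mul, Matrix.mulVec, dotProduct] at hj
  calc ‖c j‖ ≤ ‖T.det‖ * ‖c j‖ := le_mul_of_one_le_left (norm_nonneg _) hTdet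
    _ = ‖T.det * c j‖ := (norm_mul _ _).symm
    _ = ‖∑ k, T.adjugate j k * τ k‖ := by rw [hj]
    _ ≤ ∑ k, ‖T.adjugate j k * τ k‖ := norm_sum_le _ _
    _ ≤ ∑ _k : ι × ι, ((Fintype.card (ι × ι)).factorial * B ^ Fintype.card (ι × ι)) * t := by
        refine Finset.sum_le_sum fun k _ => ?_
        rw [norm_mul]
        refine mul_le_mul (adj_bound T B hB1 (fun a b => ?_) j k) (ht k) (norm_nonneg _)
          (by positivity)
        rw [hTentry]; exact hB a b
    _ = DD (Fintype.card (ι × ι)) B * t := by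
        rw [Finset.sum_const, Finset.card_univ, nsmul_eq_mul, DD]; ring

end core
end UG

namespace UG
section core2
open Matrix
set_option linter.unusedSectionVars false

variable {ι : Type*} [Fintype ι] [DecidableEq ι] {I : Type*} [Fintype I]

/-- The coloring property: in any covering of the index set by two pieces one piece contains a
tuple of matrices that are linearly independent. -/
def Coloring (w : I → Matrix ι ι ℤ) : Prop :=
  ∀ p q : I → Prop, (∀ i, p i ∨ q i) → ∃ f : ι × ι → I,
    (rowsMat fun j => w (f j)).det ≠ 0 ∧ ((∀ j, p (f j)) ∨ (∀ j, q (f j)))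

/-- The size of `x` seen by the functional `φ` and the matrices `w i`. -/
noncomputable def Phi (w : I → Matrix ι ι ℤ) (φ x : ι → ℂ) : ℝ :=
  ‖fun i => φ ⬝ᵥ (cx (w i) *ᵥ x)‖

lemma le_Phi (w : I → Matrix ι ι ℤ) (φ x : ι → ℂ) (i : I) :
    ‖φ ⬝ᵥ (cx (w i) *ᵥ x)‖ ≤ Phi w φ x :=
  norm_le_pi_norm (fun i => φ ⬝ᵥ (cx (w i) *ᵥ x)) i

lemma Phi_nonneg (w : I → Matrix ι ι ℤ) (φ x : ι → ℂ) : 0 ≤ Phi w φ x := norm_nonneg _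

lemma Phi_le (w : I → Matrix ι ι ℤ) (φ x : ι → ℂ) (t : ℝ) (ht : 0 ≤ t)
    (h : ∀ i, ‖φ ⬝ᵥ (cx (w i) *ᵥ x)‖ ≤ t) : Phi w φ x ≤ t :=
  (pi_norm_le_iff_of_nonneg ht).2 h

lemma dot_sum (φ x : ι → ℂ) {K : Type*} [Fintype K] (c : K → ℂ) (M : K → Matrix ι ι ℂ) :
    φ ⬝ᵥ ((∑ j, c j • M j) *ᵥ x) = ∑ j, c j * (φ ⬝ᵥ (M j *ᵥ x)) := by
  rw [Matrix.sum_mulVec, dotProduct_sum]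
  refine Finset.sum_congr rfl fun j _ => ?_
  rw [Matrix.smul_mulVec, dotProduct_smul, smul_eq_mul]

lemma dot_sum_le (φ x : ι → ℂ) {K : Type*} [Fintype K] (c : K → ℂ) (M : K → Matrix ι ι ℂ)
    (s t : ℝ) (hc : ∀ j, ‖c j‖ ≤ s) (hM : ∀ j, ‖φ ⬝ᵥ (M j *ᵥ x)‖ ≤ t) :
    ‖φ ⬝ᵥ ((∑ j, c j • M j) *ᵥ x)‖ ≤ Fintype.card K * s * t := by
  rw [dot_sum]
  calc _ ≤ ∑ j, ‖c j * (φ ⬝ᵥ (M j *ᵥ x))‖ := norm_sum_le _ _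
    _ ≤ ∑ _j : K, s * t := by
        refine Finset.sum_le_sum fun j _ => ?_
        rw [norm_mul]
        exact mul_le_mul (hc j) (hM j) (norm_nonneg _) ((norm_nonneg _).trans (hc j))
    _ = _ := by rw [Finset.sum_const, Finset.card_univ, nsmul_eq_mul]; ring

lemma Phi_le_of_tuple (w : I → Matrix ι ι ℤ) (B : ℝ) (hB1 : 1 ≤ B)
    (hB2 : ∀ i j, ‖(cx (w i) * cx (w j)).trace‖ ≤ B)
    (f : ι × ι → I) (hf : (rowsMat fun j => w (f j)).det ≠ 0) (φ x : ι → ℂ)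
    (t : ℝ) (ht0 : 0 ≤ t) (ht : ∀ j, ‖φ ⬝ᵥ (cx (w (f j)) *ᵥ x)‖ ≤ t) :
    Phi w φ x ≤ (Fintype.card (ι × ι) * (DD (Fintype.card (ι × ι)) B * B)) * t := by
  have hD : 0 ≤ DD (Fintype.card (ι × ι)) B := by unfold DD; positivity
  refine Phi_le _ _ _ _ (by positivity) fun i => ?_
  obtain ⟨c, hc, hc'⟩ := expand (fun j => w (f j)) B hB1 (fun j k => hB2 _ _) hf (cx (w i))
  rw [hc]
  exact dot_sum_le _ _ _ _ _ _ (hc' B fun k => hB2 _ _) ht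

lemma Phi_pos (w : I → Matrix ι ι ℤ) (B : ℝ) (hB1 : 1 ≤ B)
    (hB2 : ∀ i j, ‖(cx (w i) * cx (w j)).trace‖ ≤ B)
    (f : ι × ι → I) (hf : (rowsMat fun j => w (f j)).det ≠ 0) (φ x : ι → ℂ)
    (hφ : φ ≠ 0) (hx : x ≠ 0) : 0 < Phi w φ x := by
  refine lt_of_le_of_ne (Phi_nonneg _ _ _) fun h0 => ?_
  have h1 : ∀ i, φ ⬝ᵥ (cx (w i) *ᵥ x) = 0 := fun i => by
    have := le_Phi w φ x i
    rw [← h0] at this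
    exact norm_le_zero_iff.1 this
  obtain ⟨a, ha⟩ := Function.ne_iff.1 hφ
  obtain ⟨b, hb⟩ := Function.ne_iff.1 hx
  obtain ⟨c, hc, -⟩ := expand (fun j => w (f j)) B hB1 (fun j k => hB2 _ _) hf
    (Matrix.single a b (1 : ℂ))
  have h2 : φ ⬝ᵥ ((Matrix.single a b (1 : ℂ)) *ᵥ x) = 0 := by
    rw [hc, dot_sum]
    exact Finset.sum_eq_zero fun j _ => by rw [h1, mul_zero]
  have h3 : φ ⬝ᵥ ((Matrix.single a b (1 : ℂ)) *ᵥ x) = φ a * x b := by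
    rw [Matrix.single_mulVec]
    simp [dotProduct, Function.update_apply]
  rw [h3] at h2
  exact mul_ne_zero ha hb h2

lemma Phi_cross (w : I → Matrix ι ι ℤ) (B : ℝ) (hB1 : 1 ≤ B)
    (hB2 : ∀ i j, ‖(cx (w i) * cx (w j)).trace‖ ≤ B)
    (hB4 : ∀ k i j h, ‖(cx (w k) * (cx (w i) * cx (w j) * cx (w h))).trace‖ ≤ B)
    (f : ι × ι → I) (hf : (rowsMat fun j => w (f j)).det ≠ 0) (φ ψ x y : ι → ℂ) :
    Phi w φ x * Phi w ψ y ≤ ((Fintype.card (ι × ι) * DD (Fintype.card (ι × ι)) B) *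
      (Fintype.card (ι × ι) * (DD (Fintype.card (ι × ι)) B * B))) * (Phi w ψ x * Phi w φ y) := by
  set N := Fintype.card (ι × ι) with hN
  have hD : 0 ≤ DD N B := by unfold DD; positivity
  have p1 := Phi_nonneg w ψ x
  have p2 := Phi_nonneg w φ y
  -- pointwise
  have key : ∀ i k, ‖φ ⬝ᵥ (cx (w i) *ᵥ x)‖ * ‖ψ ⬝ᵥ (cx (w k) *ᵥ y)‖ ≤
      ((N * DD N B) * (N * (DD N B * B))) * (Phi w ψ x * Phi w φ y) := by
    intro i k
    obtain ⟨c, hc, hc'⟩ := expand (fun j => w (f j)) B hB1 (fun j k => hB2 _ _) hf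
      (Matrix.vecMulVec x ψ)
    have hcb : ∀ j, ‖c j‖ ≤ DD N B * Phi w ψ x := by
      refine hc' _ fun k => ?_
      rw [Matrix.mul_vecMulVec, Matrix.trace_vecMulVec, dotProduct_comm]
      exact le_Phi _ _ _ _
    have e1 : (φ ⬝ᵥ (cx (w i) *ᵥ x)) * (ψ ⬝ᵥ (cx (w k) *ᵥ y)) =
        φ ⬝ᵥ ((∑ j, c j • (cx (w i) * cx (w (f j)) * cx (w k))) *ᵥ y) := by
      have : (∑ j, c j • (cx (w i) * cx (w (f j)) * cx (w k))) =
          cx (w i) * Matrix.vecMulVec x ψ * cx (w k) := by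
        rw [hc, Matrix.mul_sum, Matrix.sum_mul]
        refine Finset.sum_congr rfl fun j _ => ?_
        rw [Matrix.mul_smul, Matrix.smul_mul]
      rw [this, Matrix.mul_vecMulVec, ← Matrix.mulVec_mulVec, Matrix.vecMulVec_mulVec]
      simp [dotProduct_smul, mul_comm]
    rw [← norm_mul, e1]
    refine (dot_sum_le φ y c _ _ (N * (DD N B * B) * Phi w φ y) hcb fun j => ?_).trans
      (le_of_eq ?_)
    · obtain ⟨d, hd, hd'⟩ := expand (fun j => w (f j)) B hB1 (fun j k => hB2 _ _) hf
        (cx (w i) * cx (w (f j)) * cx (w k))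
      rw [hd]
      exact dot_sum_le _ _ _ _ _ _ (hd' B fun k => hB4 _ _ _ _) fun j => le_Phi _ _ _ _
    · rw [← hN]; ring
  set K := ((N * DD N B) * (N * (DD N B * B))) * (Phi w ψ x * Phi w φ y) with hK
  have hK0 : 0 ≤ K := by positivity
  have step : ∀ k, Phi w φ x * ‖ψ ⬝ᵥ (cx (w k) *ᵥ y)‖ ≤ K := by
    intro k
    have : Phi w φ x * ‖ψ ⬝ᵥ (cx (w k) *ᵥ y)‖ =
        ‖(ψ ⬝ᵥ (cx (w k) *ᵥ y)) • fun i => φ ⬝ᵥ (cx (w i) *ᵥ x)‖ := by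
      rw [norm_smul, Phi, mul_comm]
    rw [this]
    refine (pi_norm_le_iff_of_nonneg hK0).2 fun i => ?_
    rw [Pi.smul_apply, smul_eq_mul, norm_mul, mul_comm]
    exact key i k
  have : Phi w φ x * Phi w ψ y =
      ‖((Phi w φ x : ℝ) : ℂ) • fun i => ψ ⬝ᵥ (cx (w i) *ᵥ y)‖ := by
    rw [norm_smul, Complex.norm_real, Real.norm_of_nonneg (Phi_nonneg _ _ _)]; rfl
  rw [this]
  refine (pi_norm_le_iff_of_nonneg hK0).2 fun i => ?_
  rw [Pi.smul_apply, smul_eq_mul, norm_mul, Complex.norm_real,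
    Real.norm_of_nonneg (Phi_nonneg _ _ _)]
  exact step i

/-- the distortion constant -/
noncomputable def EE (N : ℕ) (B : ℝ) : ℝ :=
  2 * (N * (DD N B * B)) * ((N * DD N B) * (N * (DD N B * B)))

lemma cover (w : I → Matrix ι ι ℤ) (B : ℝ) (hB1 : 1 ≤ B)
    (hB2 : ∀ i j, ‖(cx (w i) * cx (w j)).trace‖ ≤ B)
    (hB4 : ∀ k i j h, ‖(cx (w k) * (cx (w i) * cx (w j) * cx (w h))).trace‖ ≤ B)
    (hcol : Coloring w) (φ ψ x y : ι → ℂ) (hφ : φ ≠ 0) (hψ : ψ ≠ 0) (hx : x ≠ 0)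
    (hy : y ≠ 0) : ∃ i, 0 < ‖ψ ⬝ᵥ (cx (w i) *ᵥ y)‖ ∧
      Phi w φ x * ‖ψ ⬝ᵥ (cx (w i) *ᵥ y)‖ ≤
        EE (Fintype.card (ι × ι)) B * (Phi w ψ x * ‖φ ⬝ᵥ (cx (w i) *ᵥ y)‖) ∧
      Phi w ψ x * ‖φ ⬝ᵥ (cx (w i) *ᵥ y)‖ ≤
        EE (Fintype.card (ι × ι)) B * (Phi w φ x * ‖ψ ⬝ᵥ (cx (w i) *ᵥ y)‖) := by
  set N := Fintype.card (ι × ι) with hN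
  set D1 := N * (DD N B * B) with hD1
  set D2 := ((N * DD N B) * (N * (DD N B * B))) with hD2
  have hEE : EE N B = 2 * D1 * D2 := rfl
  have hNpos : 0 < N := by
    obtain ⟨a, -⟩ := Function.ne_iff.1 hφ
    exact Fintype.card_pos_iff.2 ⟨(a, a)⟩
  have hD : 0 < DD N B := by unfold DD; positivity
  have hD1p : 0 < D1 := by positivity
  have hD2p : 0 < D2 := by positivity
  obtain ⟨f0, hf0, -⟩ := hcol (fun _ => True) (fun _ => True) (fun _ => Or.inl trivial)
  have pφx := Phi_pos w B hB1 hB2 f0 hf0 φ x hφ hx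
  have pψx := Phi_pos w B hB1 hB2 f0 hf0 ψ x hψ hx
  have pφy := Phi_pos w B hB1 hB2 f0 hf0 φ y hφ hy
  have pψy := Phi_pos w B hB1 hB2 f0 hf0 ψ y hψ hy
  have hex : ∃ i, Phi w φ y < 2 * D1 * ‖φ ⬝ᵥ (cx (w i) *ᵥ y)‖ ∧
      Phi w ψ y < 2 * D1 * ‖ψ ⬝ᵥ (cx (w i) *ᵥ y)‖ := by
    by_contra hno
    push Not at hno
    have small : ∀ θ : ι → ℂ, 0 < Phi w θ y → ∀ f : ι × ι → I,
        (rowsMat fun j => w (f j)).det ≠ 0 →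
        (∀ j, 2 * D1 * ‖θ ⬝ᵥ (cx (w (f j)) *ᵥ y)‖ ≤ Phi w θ y) → False := by
      intro θ hθ f hf h
      have := Phi_le_of_tuple w B hB1 hB2 f hf θ y (Phi w θ y / (2 * D1)) (by positivity)
        (fun j => by rw [le_div_iff₀ (by positivity)]; linarith [h j])
      rw [← hN, ← hD1] at this
      have e : D1 * (Phi w θ y / (2 * D1)) = Phi w θ y / 2 := by field_simp
      rw [e] at this
      linarith
    obtain ⟨f, hf, h | h⟩ := hcol (fun i => 2 * D1 * ‖φ ⬝ᵥ (cx (w i) *ᵥ y)‖ ≤ Phi w φ y)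
      (fun i => 2 * D1 * ‖ψ ⬝ᵥ (cx (w i) *ᵥ y)‖ ≤ Phi w ψ y)
      (fun i => by
        by_cases h : 2 * D1 * ‖φ ⬝ᵥ (cx (w i) *ᵥ y)‖ ≤ Phi w φ y
        · exact Or.inl h
        · exact Or.inr (hno i (not_le.1 h)))
    · exact small φ pφy f hf h
    · exact small ψ pψy f hf h
  obtain ⟨i, h1, h2⟩ := hex
  set u := ‖φ ⬝ᵥ (cx (w i) *ᵥ y)‖ with hu
  set v := ‖ψ ⬝ᵥ (cx (w i) *ᵥ y)‖ with hv
  have hvp : 0 < v := by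
    by_contra hcon
    have : 2 * D1 * v ≤ 0 := mul_nonpos_of_nonneg_of_nonpos (by positivity) (not_lt.1 hcon)
    linarith
  have hu1 : u ≤ Phi w φ y := le_Phi _ _ _ _
  have hv1 : v ≤ Phi w ψ y := le_Phi _ _ _ _
  have c1 := Phi_cross w B hB1 hB2 hB4 f0 hf0 φ ψ x y
  have c2 := Phi_cross w B hB1 hB2 hB4 f0 hf0 ψ φ x y
  rw [← hN, ← hD2] at c1 c2
  refine ⟨i, hvp, ?_, ?_⟩
  · calc Phi w φ x * v ≤ Phi w φ x * Phi w ψ y := by gcongr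
      _ ≤ D2 * (Phi w ψ x * Phi w φ y) := c1
      _ ≤ D2 * (Phi w ψ x * (2 * D1 * u)) := by gcongr
      _ = _ := by rw [hEE]; ring
  · calc Phi w ψ x * u ≤ Phi w ψ x * Phi w φ y := by gcongr
      _ ≤ D2 * (Phi w φ x * Phi w ψ y) := c2
      _ ≤ D2 * (Phi w φ x * (2 * D1 * v)) := by gcongr
      _ = _ := by rw [hEE]; ring

end core2
end UG

namespace UG
section core3
open Matrix
set_option linter.unusedSectionVars false

variable {ι : Type*} [Fintype ι] [DecidableEq ι]

lemma dot_pow (a : Matrix ι ι ℂ) (φ z : ι → ℂ) (l : ℂ) (h : φ ᵥ* a = l • φ) (m : ℕ) :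
    ‖φ ⬝ᵥ ((a ^ m) *ᵥ z)‖ = ‖l‖ ^ m * ‖φ ⬝ᵥ z‖ := by
  induction m generalizing z with
  | zero => simp
  | succ m ih =>
    rw [pow_succ, ← Matrix.mulVec_mulVec, ih, Matrix.dotProduct_mulVec, h, smul_dotProduct,
      smul_eq_mul, norm_mul]
    ring

lemma disjoint_pow (a : Matrix ι ι ℂ) (φ ψ z : ι → ℂ) (l m : ℂ) (hl : φ ᵥ* a = l • φ)
    (hm : ψ ᵥ* a = m • ψ) (hm1 : ‖m‖ ≤ 1) (P Q E : ℝ) (hP : 0 < P) (hQ : 0 < Q)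
    (k : ℕ) (hk : E ^ 2 < ‖l‖ ^ k) (h1 : 0 < ‖ψ ⬝ᵥ z‖)
    (h2 : P * ‖ψ ⬝ᵥ z‖ ≤ E * (Q * ‖φ ⬝ᵥ z‖)) (hE : 0 ≤ E)
    (h3 : Q * ‖φ ⬝ᵥ ((a ^ k) *ᵥ z)‖ ≤ E * (P * ‖ψ ⬝ᵥ ((a ^ k) *ᵥ z)‖)) : False := by
  rw [dot_pow a φ z l hl, dot_pow a ψ z m hm] at h3
  have hmk : ‖m‖ ^ k ≤ 1 := pow_le_one₀ (norm_nonneg _) hm1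
  set u := ‖φ ⬝ᵥ z‖
  set v := ‖ψ ⬝ᵥ z‖
  have hu : 0 < u := by
    have hu0 : 0 ≤ u := norm_nonneg _
    rcases hu0.lt_or_eq with h | h
    · exact h
    · rw [← h] at h2
      have := mul_pos hP h1
      simp at h2
      linarith
  have : Q * (‖l‖ ^ k * u) ≤ E ^ 2 * (Q * u) :=
    calc Q * (‖l‖ ^ k * u) ≤ E * (P * (‖m‖ ^ k * v)) := h3
      _ ≤ E * (P * (1 * v)) := by gcongr
      _ = E * (P * v) := by ring
      _ ≤ E * (E * (Q * u)) := by gcongr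
      _ = _ := by ring
  have h5 : E ^ 2 * (Q * u) < ‖l‖ ^ k * (Q * u) := by
    apply mul_lt_mul_of_pos_right hk (by positivity)
  linarith

lemma exists_left_eigen (a : Matrix ι ι ℂ) (l : ℂ) (h : l ∈ a.charpoly.roots) :
    ∃ φ : ι → ℂ, φ ≠ 0 ∧ φ ᵥ* a = l • φ := by
  have h1 : a.charpoly.eval l = 0 := (Polynomial.mem_roots'.1 h).2
  rw [Matrix.eval_charpoly] at h1
  obtain ⟨v, hv, hv2⟩ := Matrix.exists_vecMul_eq_zero_iff.2 h1
  refine ⟨v, hv, ?_⟩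
  rw [Matrix.vecMul_sub, sub_eq_zero] at hv2
  rw [← hv2]
  ext i
  simp [Matrix.scalar_apply, Matrix.vecMul_diagonal, mul_comm]

lemma card_roots_charpoly (a : Matrix ι ι ℂ) : Multiset.card a.charpoly.roots = Fintype.card ι := by
  rw [IsAlgClosed.card_roots_eq_natDegree, Matrix.charpoly_natDegree_eq_dim]

lemma trace_bound (a : Matrix ι ι ℂ) (R : ℝ) (h : ∀ l ∈ a.charpoly.roots, ‖l‖ ≤ R) :
    ‖a.trace‖ ≤ Fintype.card ι * R := by
  rw [Matrix.trace_eq_sum_roots_charpoly, ← card_roots_charpoly a]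
  refine (norm_multiset_sum_le _).trans ?_
  refine (Multiset.sum_le_card_nsmul _ R ?_).trans ?_
  · intro x hx
    obtain ⟨l, hl, rfl⟩ := Multiset.mem_map.1 hx
    exact h l hl
  · rw [Multiset.card_map, nsmul_eq_mul]

lemma exists_small_root (a : Matrix ι ι ℂ) [Nonempty ι] (hd : ‖a.det‖ = 1) :
    ∃ m ∈ a.charpoly.roots, ‖m‖ ≤ 1 := by
  by_contra hno
  push Not at hno
  rw [Matrix.det_eq_prod_roots_charpoly] at hd
  have hpos : ∀ s : Multiset ℂ, (∀ m ∈ s, 1 < ‖m‖) → 1 ≤ ‖s.prod‖ ∧ (s ≠ 0 → 1 < ‖s.prod‖) := by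
    intro s
    induction s using Multiset.induction with
    | empty => simp
    | cons x s ih =>
      intro h
      have h1 := h x (Multiset.mem_cons_self _ _)
      have h2 := (ih fun m hm => h m (Multiset.mem_cons_of_mem hm)).1
      rw [Multiset.prod_cons, norm_mul]
      constructor
      · nlinarith
      · intro _; nlinarith
  have := (hpos _ hno).2 (by
    intro h0
    have := card_roots_charpoly a
    rw [h0] at this
    have h1 : 0 < Fintype.card ι := Fintype.card_pos
    simp at this
    omega)
  linarith

lemma choose_a {H : Type*} [Nonempty ι] (F : Set H) (hF : F.Finite) (m : H → Matrix ι ι ℤ)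
    (hdet : ∀ h ∈ F, ‖(cx (m h)).det‖ = 1) (h0 : H) (hh0 : h0 ∈ F)
    (ht : (Fintype.card ι : ℝ) + 1 ≤ ‖(cx (m h0)).trace‖) :
    ∃ a ∈ F, ∃ R : ℝ, (Fintype.card ι : ℝ) + 1 ≤ Fintype.card ι * R ∧
      (∀ h ∈ F, ‖(cx (m h)).trace‖ ≤ Fintype.card ι * R) ∧
      ∃ (φ ψ : ι → ℂ) (l k : ℂ), φ ≠ 0 ∧ ψ ≠ 0 ∧ φ ᵥ* cx (m a) = l • φ ∧ ψ ᵥ* cx (m a) = k • ψ ∧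
        ‖l‖ = R ∧ ‖k‖ ≤ 1 := by
  set Z : Set (H × ℂ) := ⋃ h ∈ F, (fun l => (h, l)) '' {l | l ∈ (cx (m h)).charpoly.roots} with hZ
  have hZf : Z.Finite := hF.biUnion fun h _ =>
    Set.Finite.image _ (by
      have := ((cx (m h)).charpoly.roots.toFinset).finite_toSet
      refine this.subset fun l hl => ?_
      simpa using hl)
  have hmem : ∀ h l, (h, l) ∈ Z ↔ h ∈ F ∧ l ∈ (cx (m h)).charpoly.roots := by
    intro h l
    simp [hZ]
    tauto
  obtain ⟨k0, hk0, -⟩ := exists_small_root (cx (m h0)) (hdet h0 hh0)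
  obtain ⟨⟨a, l⟩, hal, hmax⟩ := Set.exists_max_image Z (fun p => ‖p.2‖) hZf
    ⟨(h0, k0), (hmem _ _).2 ⟨hh0, hk0⟩⟩
  obtain ⟨haF, hl⟩ := (hmem _ _).1 hal
  have htr : ∀ h ∈ F, ‖(cx (m h)).trace‖ ≤ Fintype.card ι * ‖l‖ := by
    intro h hh
    exact trace_bound _ _ fun l' hl' => hmax (h, l') ((hmem _ _).2 ⟨hh, hl'⟩)
  obtain ⟨k, hk, hk1⟩ := exists_small_root (cx (m a)) (hdet a haF)
  obtain ⟨φ, hφ, hφ'⟩ := exists_left_eigen _ _ hl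
  obtain ⟨ψ, hψ, hψ'⟩ := exists_left_eigen _ _ hk
  exact ⟨a, haF, ‖l‖, ht.trans (htr h0 hh0), htr, φ, ψ, l, k, hφ, hψ, hφ', hψ', rfl, hk1⟩

lemma EE_eq (N : ℕ) (B : ℝ) : EE N B =
    (2 * (N : ℝ) ^ 3 * ((N : ℝ) * N.factorial) ^ 3) * B ^ (3 * N + 2) := by
  unfold EE DD; ring

lemma exists_exponent (n N : ℕ) (hn : 1 ≤ n) : ∃ L : ℕ, 1 ≤ L ∧ ∀ R : ℝ, (n : ℝ) + 1 ≤ n * R →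
    ∀ k ≥ L, EE N (n * R) ^ 2 < R ^ k := by
  have hn0 : (0 : ℝ) < n := by exact_mod_cast hn
  set C : ℝ := (2 * (N : ℝ) ^ 3 * ((N : ℝ) * N.factorial) ^ 3) ^ 2 * ((n : ℝ) ^ (3 * N + 2)) ^ 2
    with hC
  have h1 : (1 : ℝ) < 1 + 1 / n := by
    have : 0 < 1 / (n : ℝ) := by positivity
    linarith
  obtain ⟨l, hl⟩ := pow_unbounded_of_one_lt C h1
  refine ⟨l + 1 + (3 * N + 2) * 2, by omega, fun R hR k hk => ?_⟩
  have hR1 : 1 + 1 / (n : ℝ) ≤ R := by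
    have : 1 + 1 / (n : ℝ) = ((n : ℝ) + 1) / n := by field_simp
    rw [this, div_le_iff₀ hn0]; linarith
  have hR0 : 1 < R := by linarith
  have hR00 : 0 < R := by linarith
  calc EE N (n * R) ^ 2 = C * R ^ ((3 * N + 2) * 2) := by rw [EE_eq, hC, mul_pow]; ring
    _ < R ^ l * R ^ ((3 * N + 2) * 2) := by
        apply mul_lt_mul_of_pos_right _ (by positivity)
        exact hl.trans_le (by gcongr)
    _ = R ^ (l + (3 * N + 2) * 2) := by rw [pow_add]
    _ ≤ R ^ k := pow_le_pow_right₀ hR0.le (by omega)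

end core3
end UG

namespace UG
section symp
open Matrix
set_option linter.unusedSectionVars false

variable {g : ℕ}

/-- the symplectic partner of an index -/
def pr (i : Fin (2 * g)) : Fin (2 * g) :=
  if h : (i : ℕ) % 2 = 0 then ⟨i + 1, by have := i.2; omega⟩ else ⟨i - 1, by have := i.2; omega⟩

/-- the sign of an index -/
def sg (i : Fin (2 * g)) : ℤ := if (i : ℕ) % 2 = 0 then 1 else -1

lemma pr_val (i : Fin (2 * g)) :
    (pr i : ℕ) = if (i : ℕ) % 2 = 0 then (i : ℕ) + 1 else (i : ℕ) - 1 := by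
  unfold pr
  split_ifs <;> rfl

lemma J_apply (i j : Fin (2 * g)) : stdSymplecticJ g i j = if j = pr i then sg i else 0 := by
  unfold stdSymplecticJ sg
  simp only [Matrix.of_apply, Fin.ext_iff, pr_val]
  split_ifs <;> first | rfl | (exfalso; omega)

lemma pr_pr (i : Fin (2 * g)) : pr (pr i) = i := by
  ext
  rw [pr_val, pr_val]
  split_ifs <;> omega

lemma sg_pr (i : Fin (2 * g)) : sg (pr i) = - sg i := by
  unfold sg
  rw [pr_val]
  split_ifs <;> first | rfl | (exfalso; omega)

lemma sg_mul (i : Fin (2 * g)) : sg i * sg i = 1 := by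
  unfold sg; split_ifs <;> simp

lemma J_transpose : (stdSymplecticJ g)ᵀ = - stdSymplecticJ g := by
  ext i j
  rw [Matrix.transpose_apply, Matrix.neg_apply, J_apply, J_apply]
  by_cases h : j = pr i
  · subst h; simp [pr_pr, sg_pr]
  · have : i ≠ pr j := fun h' => h (by rw [h', pr_pr])
    simp [h, this]

lemma J_mul_J : stdSymplecticJ g * stdSymplecticJ g = -1 := by
  ext i j
  rw [Matrix.mul_apply]
  simp only [J_apply]
  rw [Finset.sum_eq_single (pr i)]
  · simp only [if_true, pr_pr, sg_pr, Matrix.neg_apply, Matrix.one_apply]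
    by_cases h : i = j
    · subst h; simp [sg_mul]
    · have : j ≠ i := fun h' => h h'.symm
      simp [h, this]
  · intro b _ hb; simp [hb]
  · simp

/-- The rank one symmetric matrix of a vector. -/
def PP (u : Fin (2 * g) → ℤ) : Matrix (Fin (2 * g)) (Fin (2 * g)) ℤ := Matrix.vecMulVec u u

lemma PP_T (u : Fin (2 * g) → ℤ) : (PP u)ᵀ = PP u := by
  unfold PP; exact Matrix.transpose_vecMulVec u u

/-- The symplectic form -/
def om (u v : Fin (2 * g) → ℤ) : ℤ := u ⬝ᵥ (stdSymplecticJ g *ᵥ v)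

lemma om_self (u : Fin (2 * g) → ℤ) : om u u = 0 := by
  have h : om u u = - om u u := by
    conv_lhs => rw [om, Matrix.dotProduct_mulVec, ← Matrix.mulVec_transpose, J_transpose,
      Matrix.neg_mulVec, neg_dotProduct, dotProduct_comm]
    rfl
  omega

lemma PJP (u v : Fin (2 * g) → ℤ) : PP u * stdSymplecticJ g * PP v = om u v • Matrix.vecMulVec u v := by
  unfold PP om
  rw [mul_assoc, Matrix.mul_vecMulVec, Matrix.vecMulVec_mul_vecMulVec]
  ext i j
  simp [Matrix.vecMulVec_apply]
  ring

lemma PJP_self (u : Fin (2 * g) → ℤ) : PP u * stdSymplecticJ g * PP u = 0 := by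
  rw [PJP, om_self, zero_smul]

/-- the nilpotent part of a transvection -/
def nu (u : Fin (2 * g) → ℤ) : Matrix (Fin (2 * g)) (Fin (2 * g)) ℤ := PP u * stdSymplecticJ g

lemma nu_sq (u : Fin (2 * g) → ℤ) : nu u * nu u = 0 := by
  unfold nu
  rw [← mul_assoc, PJP_self, zero_mul]

lemma nu_mul (u v : Fin (2 * g) → ℤ) :
    nu u * nu v = om u v • (Matrix.vecMulVec u v * stdSymplecticJ g) := by
  unfold nu
  rw [← mul_assoc, PJP, smul_mul_assoc]

/-- Transvection in GL -/
def tvGL (u : Fin (2 * g) → ℤ) : GL (Fin (2 * g)) ℤ where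
  val := 1 + nu u
  inv := 1 - nu u
  val_inv := by
    have := nu_sq u
    calc (1 + nu u) * (1 - nu u) = 1 - nu u * nu u := by noncomm_ring
      _ = 1 := by rw [this, sub_zero]
  inv_val := by
    have := nu_sq u
    calc (1 - nu u) * (1 + nu u) = 1 - nu u * nu u := by noncomm_ring
      _ = 1 := by rw [this, sub_zero]

/-- Transvection in Sp -/
def tv (u : Fin (2 * g) → ℤ) : Sp g := ⟨tvGL u, by
  change (1 + nu u) * stdSymplecticJ g * (1 + nu u)ᵀ = stdSymplecticJ g
  have e1 : (nu u)ᵀ = - (stdSymplecticJ g * PP u) := by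
    unfold nu
    rw [Matrix.transpose_mul, J_transpose, PP_T, neg_mul]
  have e2 : nu u * stdSymplecticJ g = - PP u := by
    unfold nu
    rw [mul_assoc, J_mul_J, mul_neg, mul_one]
  have e3 : stdSymplecticJ g * (stdSymplecticJ g * PP u) = - PP u := by
    rw [← mul_assoc, J_mul_J, neg_mul, one_mul]
  have e4 : PP u * (stdSymplecticJ g * PP u) = 0 := by
    rw [← mul_assoc, PJP_self]
  rw [Matrix.transpose_add, Matrix.transpose_one, e1, add_mul, one_mul, e2, mul_add, mul_one,
    mul_neg, add_mul, e3, neg_mul, e4]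
  abel⟩

/-- underlying matrix -/
def mt (x : Sp g) : Matrix (Fin (2 * g)) (Fin (2 * g)) ℤ := ((x : GL (Fin (2 * g)) ℤ) : Matrix _ _ ℤ)

lemma mt_mul (x y : Sp g) : mt (x * y) = mt x * mt y := rfl
lemma mt_one : mt (1 : Sp g) = 1 := rfl
lemma mt_tv (u : Fin (2 * g) → ℤ) : mt (tv u) = 1 + nu u := rfl
lemma mt_tv_inv (u : Fin (2 * g) → ℤ) : mt (tv u)⁻¹ = 1 - nu u := rfl

lemma mt_tv_pow (u : Fin (2 * g) → ℤ) (m : ℕ) : mt (tv u ^ m) = 1 + m • nu u := by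
  induction m with
  | zero => simp [mt_one]
  | succ m ih =>
    rw [pow_succ, mt_mul, ih, mt_tv, mul_add, mul_one, add_mul, one_mul, smul_mul_assoc, nu_sq,
      smul_zero, add_zero, succ_nsmul]
    abel

lemma trace_nu (u : Fin (2 * g) → ℤ) : (nu u).trace = 0 := by
  unfold nu PP
  rw [Matrix.trace_mul_comm, Matrix.mul_vecMulVec, Matrix.trace_vecMulVec, dotProduct_comm]
  exact om_self u

/-- basis vector -/
def eb (i : Fin (2 * g)) : Fin (2 * g) → ℤ := Pi.single i 1

lemma om_eb (i : Fin (2 * g)) (v : Fin (2 * g) → ℤ) : om (eb i) v = sg i * v (pr i) := by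
  unfold om eb
  rw [single_one_dotProduct]
  simp [Matrix.mulVec, dotProduct, J_apply]

lemma vmv_eb (i j : Fin (2 * g)) : Matrix.vecMulVec (eb i) (eb j) = Matrix.single i j (1 : ℤ) := by
  unfold eb
  rw [Matrix.single_eq_single_vecMulVec_single]

lemma trace_a0 (i : Fin (2 * g)) : (mt (tv (eb i) * (tv (eb (pr i)))⁻¹)).trace = 2 * g + 1 := by
  rw [mt_mul, mt_tv, mt_tv_inv]
  have e : (1 + nu (eb i)) * (1 - nu (eb (pr i))) =
      1 + nu (eb i) - nu (eb (pr i)) - nu (eb i) * nu (eb (pr i)) := by noncomm_ring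
  rw [e, nu_mul, Matrix.trace_sub, Matrix.trace_sub, Matrix.trace_add, trace_nu, trace_nu,
    Matrix.trace_one, om_eb, Matrix.trace_smul, Matrix.trace_mul_comm, Matrix.mul_vecMulVec,
    Matrix.trace_vecMulVec, dotProduct_comm]
  have : eb (pr i) ⬝ᵥ (stdSymplecticJ g *ᵥ eb i) = om (eb (pr i)) (eb i) := rfl
  rw [this, om_eb, pr_pr, sg_pr]
  have := sg_mul i
  simp [eb]
  linarith

end symp
end UG

namespace UG
section fam
open Matrix

variable {g : ℕ}

/-- rational matrix of a symplectic element -/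
def mq (M : Matrix (Fin (2 * g)) (Fin (2 * g)) ℤ) : Matrix (Fin (2 * g)) (Fin (2 * g)) ℚ :=
  M.map (Int.castRingHom ℚ)

lemma mq_mul (M N : Matrix (Fin (2 * g)) (Fin (2 * g)) ℤ) : mq (M * N) = mq M * mq N := by
  unfold mq; exact Matrix.map_mul

lemma mq_one : mq (1 : Matrix (Fin (2 * g)) (Fin (2 * g)) ℤ) = 1 := by
  unfold mq; exact Matrix.map_one _ (map_zero _) (map_one _)

lemma mq_add (M N : Matrix (Fin (2 * g)) (Fin (2 * g)) ℤ) : mq (M + N) = mq M + mq N := by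
  ext; simp [mq]

lemma mq_zsmul (m : ℤ) (M : Matrix (Fin (2 * g)) (Fin (2 * g)) ℤ) :
    mq (m • M) = (m : ℚ) • mq M := by
  ext i j
  simp only [mq, Matrix.map_apply, Matrix.smul_apply, smul_eq_mul, map_mul, eq_intCast]

lemma mq_tv_pow (u : Fin (2 * g) → ℤ) (m : ℕ) (M : Matrix (Fin (2 * g)) (Fin (2 * g)) ℤ) :
    mq (mt (tv u ^ m) * M) = mq M + (m : ℚ) • (mq (nu u) * mq M) := by
  rw [mt_tv_pow, add_mul, one_mul, mq_add, ← natCast_zsmul, smul_mul_assoc, mq_zsmul, mq_mul]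
  simp

/-- The finite sets of products of transvections. -/
def YS : List (Fin (2 * g) → ℤ) → Set (Sp g)
  | [] => {1}
  | u :: us => {x | ∃ m : ℕ, m < 3 ∧ ∃ y ∈ YS us, x = tv u ^ m * y}

lemma YS_finite (us : List (Fin (2 * g) → ℤ)) : (YS us).Finite := by
  induction us with
  | nil => exact Set.finite_singleton _
  | cons u us ih =>
    refine (((Set.finite_lt_nat 3).prod ih).image fun p : ℕ × Sp g => tv u ^ p.1 * p.2).subset ?_
    rintro x ⟨m, hm, y, hy, rfl⟩
    exact ⟨(m, y), ⟨hm, hy⟩, rfl⟩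

abbrev MQ (g : ℕ) := Matrix (Fin (2 * g)) (Fin (2 * g)) ℚ

lemma affine_common (a b c d : ℚ) (m k : ℚ) (h1 : a + m * b ≠ 0) (h2 : c + k * d ≠ 0) :
    ∃ j : ℕ, j < 3 ∧ a + j * b ≠ 0 ∧ c + j * d ≠ 0 := by
  by_contra hno
  push Not at hno
  have z0 := hno 0 (by norm_num)
  have z1 := hno 1 (by norm_num)
  have z2 := hno 2 (by norm_num)
  have fin : ∀ x y t : ℚ, x + t * y ≠ 0 → ∀ p q : ℚ, p ≠ q → x + p * y = 0 → x + q * y = 0 →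
      False := by
    intro x y t ht p q hpq hp hq
    have : (p - q) * y = 0 := by linarith
    rcases mul_eq_zero.1 this with h | h
    · exact hpq (by linarith)
    · subst h
      apply ht
      linarith
  by_cases a0 : a + ((0 : ℕ) : ℚ) * b = 0 <;> by_cases a1 : a + ((1 : ℕ) : ℚ) * b = 0 <;>
    by_cases a2 : a + ((2 : ℕ) : ℚ) * b = 0
  · exact fin a b m h1 _ _ (by norm_num) a0 a1
  · exact fin a b m h1 _ _ (by norm_num) a0 a1
  · exact fin a b m h1 _ _ (by norm_num) a0 a2
  · exact fin c d k h2 _ _ (by norm_num) (z1 a1) (z2 a2)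
  · exact fin a b m h1 _ _ (by norm_num) a1 a2
  · exact fin c d k h2 _ _ (by norm_num) (z0 a0) (z2 a2)
  · exact fin c d k h2 _ _ (by norm_num) (z0 a0) (z1 a1)
  · exact fin c d k h2 _ _ (by norm_num) (z0 a0) (z1 a1)

lemma irr (us : List (Fin (2 * g) → ℤ)) : ∀ l1 l2 : MQ g →ₗ[ℚ] ℚ,
    (∃ y ∈ YS us, l1 (mq (mt y)) ≠ 0) → (∃ y ∈ YS us, l2 (mq (mt y)) ≠ 0) →
    ∃ y ∈ YS us, l1 (mq (mt y)) ≠ 0 ∧ l2 (mq (mt y)) ≠ 0 := by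
  induction us with
  | nil =>
    rintro l1 l2 ⟨y, hy, h1⟩ ⟨y', hy', h2⟩
    have e : y = 1 := hy
    have e' : y' = 1 := hy'
    subst e e'
    exact ⟨1, hy, h1, h2⟩
  | cons u us ih =>
    rintro l1 l2 ⟨_, ⟨m, -, y, hy, rfl⟩, h1⟩ ⟨_, ⟨k, -, y', hy', rfl⟩, h2⟩
    have ev : ∀ (l : MQ g →ₗ[ℚ] ℚ) (j : ℕ) (y : Sp g), l (mq (mt (tv u ^ j * y))) =
        l (mq (mt y)) + j * l (mq (nu u) * mq (mt y)) := by
      intro l j y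
      rw [mt_mul, mq_tv_pow, map_add, map_smul, smul_eq_mul]
    rw [ev] at h1 h2
    obtain ⟨j, hj, n1, n2⟩ := affine_common _ _ _ _ _ _ h1 h2
    have ev2 : ∀ (l : MQ g →ₗ[ℚ] ℚ) (y : Sp g),
        (l ∘ₗ LinearMap.mulLeft ℚ (mq (mt (tv u ^ j)))) (mq (mt y)) =
          l (mq (mt (tv u ^ j * y))) := by
      intro l y
      rw [LinearMap.comp_apply, LinearMap.mulLeft_apply, mt_mul, mq_mul]
    obtain ⟨z, hz, z1, z2⟩ := ih (l1 ∘ₗ LinearMap.mulLeft ℚ (mq (mt (tv u ^ j))))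
      (l2 ∘ₗ LinearMap.mulLeft ℚ (mq (mt (tv u ^ j))))
      ⟨y, hy, by rw [ev2, ev]; exact n1⟩ ⟨y', hy', by rw [ev2, ev]; exact n2⟩
    rw [ev2] at z1 z2
    exact ⟨_, ⟨j, hj, z, hz, rfl⟩, z1, z2⟩

/-- vanishing on the finite set -/
def Van (us : List (Fin (2 * g) → ℤ)) (l : MQ g →ₗ[ℚ] ℚ) : Prop := ∀ y ∈ YS us, l (mq (mt y)) = 0

lemma Van_tail {u : Fin (2 * g) → ℤ} {us : List (Fin (2 * g) → ℤ)} {l : MQ g →ₗ[ℚ] ℚ}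
    (h : Van (u :: us) l) : Van us l := by
  intro y hy
  have := h (tv u ^ 0 * y) ⟨0, by norm_num, y, hy, rfl⟩
  simpa using this

lemma Van_head {u : Fin (2 * g) → ℤ} {us : List (Fin (2 * g) → ℤ)} {l : MQ g →ₗ[ℚ] ℚ}
    (h : Van (u :: us) l) : Van us (l ∘ₗ LinearMap.mulLeft ℚ (mq (nu u))) := by
  intro y hy
  have h1 := h (tv u ^ 1 * y) ⟨1, by norm_num, y, hy, rfl⟩
  rw [mt_mul, mq_tv_pow, map_add, Van_tail h y hy] at h1
  simpa using h1

lemma Van_drop {vs us : List (Fin (2 * g) → ℤ)} {l : MQ g →ₗ[ℚ] ℚ}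
    (h : Van (vs ++ us) l) : Van us l := by
  induction vs with
  | nil => exact h
  | cons v vs ih => exact ih (Van_tail h)

lemma Van_mem {vs us : List (Fin (2 * g) → ℤ)} {l : MQ g →ₗ[ℚ] ℚ}
    (h : Van (vs ++ us) l) {u : Fin (2 * g) → ℤ} (hu : u ∈ vs) :
    Van us (l ∘ₗ LinearMap.mulLeft ℚ (mq (nu u))) := by
  induction vs with
  | nil => simp at hu
  | cons v vs ih =>
    rcases List.mem_cons.1 hu with rfl | hu
    · exact Van_drop (Van_head h)
    · exact ih (Van_tail h) hu

lemma Van_two {vs : List (Fin (2 * g) → ℤ)} {l : MQ g →ₗ[ℚ] ℚ}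
    (h : Van (vs ++ vs) l) {u w : Fin (2 * g) → ℤ} (hu : u ∈ vs) (hw : w ∈ vs) :
    l (mq (nu u * nu w)) = 0 := by
  have h1 := Van_mem h hu
  rw [← List.append_nil vs] at h1
  have h2 := Van_mem h1 hw 1 rfl
  simpa [mt_one, mq_one, mq_mul] using h2

/-- The list of vectors. -/
noncomputable def VV (g : ℕ) : List (Fin (2 * g) → ℤ) :=
  (Finset.univ : Finset (Fin (2 * g))).toList.map eb ++
    (Finset.univ : Finset (Fin (2 * g) × Fin (2 * g))).toList.map (fun p => eb p.1 + eb p.2)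

lemma eb_mem (i : Fin (2 * g)) : eb i ∈ VV g := by
  simp [VV]

lemma eb_add_mem (i j : Fin (2 * g)) : eb i + eb j ∈ VV g := by
  unfold VV
  refine List.mem_append_right _ (List.mem_map.2 ⟨(i, j), by simp, rfl⟩)

lemma Van_zero {l : MQ g →ₗ[ℚ] ℚ} (h : Van (VV g ++ VV g) l) : l = 0 := by
  have key : ∀ i w, w (pr i) = 1 → w ∈ VV g →
      l (mq (Matrix.vecMulVec (eb i) w * stdSymplecticJ g)) = 0 := by
    intro i w hw1 hw
    have h1 := Van_two h (eb_mem i) hw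
    rw [nu_mul, om_eb, hw1, mul_one, mq_zsmul, map_smul, smul_eq_mul] at h1
    rcases mul_eq_zero.1 h1 with h2 | h2
    · exfalso
      have := sg_mul i
      have h3 : sg i = 0 := by exact_mod_cast h2
      rw [h3] at this
      simp at this
    · exact h2
  have k1 : ∀ i, l (mq (Matrix.single i (pr i) (1 : ℤ) * stdSymplecticJ g)) = 0 := by
    intro i
    rw [← vmv_eb]
    exact key i (eb (pr i)) (by simp [eb]) (eb_mem _)
  have k2 : ∀ i j, l (mq (Matrix.single i j (1 : ℤ) * stdSymplecticJ g)) = 0 := by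
    intro i j
    by_cases hj : j = pr i
    · rw [hj]; exact k1 i
    · have := key i (eb (pr i) + eb j) (by simp [eb, Ne.symm hj]) (eb_add_mem _ _)
      rw [Matrix.vecMulVec_add, vmv_eb, vmv_eb, add_mul, mq_add, map_add, k1, zero_add] at this
      exact this
  have k3 : l ∘ₗ LinearMap.mulRight ℚ (mq (stdSymplecticJ g)) = 0 := by
    refine Matrix.ext_linearMap _ fun i j => ?_
    ext
    have := k2 i j
    rw [mq_mul] at this
    have e : mq (Matrix.single i j (1 : ℤ)) = Matrix.single i j (1 : ℚ) := by
      unfold mq; ext a b; simp [Matrix.single_apply]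
    rw [e] at this
    simpa using this
  ext1 X
  have := LinearMap.congr_fun k3 (X * (-mq (stdSymplecticJ g)))
  have hJ : mq (stdSymplecticJ g) * mq (stdSymplecticJ g) = -1 := by
    rw [← mq_mul, J_mul_J, ← neg_one_zsmul (1 : Matrix (Fin (2 * g)) (Fin (2 * g)) ℤ), mq_zsmul,
      mq_one]
    simp
  simp only [LinearMap.comp_apply, LinearMap.mulRight_apply, mul_assoc, neg_mul, hJ, neg_neg,
    mul_one] at this
  exact this

lemma tuple_of_span (s : Set (Matrix (Fin (2 * g)) (Fin (2 * g)) ℤ))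
    (hs : Submodule.span ℚ (Set.image mq s) = ⊤) :
    ∃ f : Fin (2 * g) × Fin (2 * g) → Matrix (Fin (2 * g)) (Fin (2 * g)) ℤ,
      (∀ j, f j ∈ s) ∧ (rowsMat f).det ≠ 0 := by
  obtain ⟨f, hf1, hf2, hf3⟩ := Submodule.exists_fun_fin_finrank_span_eq ℚ (Set.image mq s)
  have hcard : Fintype.card (Fin (2 * g) × Fin (2 * g)) =
      Fintype.card (Fin (Module.finrank ℚ (Submodule.span ℚ (Set.image mq s)))) := by
    rw [Fintype.card_fin, hs, finrank_top, Module.finrank_matrix]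
    simp
  let e := Fintype.equivOfCardEq hcard
  choose F hF1 hF2 using fun j => hf1 (e j)
  refine ⟨F, hF1, ?_⟩
  have hli : LinearIndependent ℚ fun j => f (e j) := hf3.comp e e.injective
  let E : MQ g →ₗ[ℚ] (Fin (2 * g) × Fin (2 * g) → ℚ) :=
    { toFun := fun X p => X p.1 p.2, map_add' := fun _ _ => rfl, map_smul' := fun _ _ => rfl }
  have hE : LinearMap.ker E = ⊥ := by
    rw [LinearMap.ker_eq_bot]
    intro X Y h
    ext i j
    exact congrFun h (i, j)
  have hli2 := hli.map' E hE
  set A : Matrix (Fin (2 * g) × Fin (2 * g)) (Fin (2 * g) × Fin (2 * g)) ℚ :=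
    (rowsMat F).map (Int.castRingHom ℚ) with hA
  have hrow : A.row = E ∘ fun j => f (e j) := by
    funext j p
    simp only [Function.comp, ← hF2]
    rfl
  have hu : IsUnit A := by
    rw [← Matrix.linearIndependent_rows_iff_isUnit, hrow]
    exact hli2
  have hd : A.det ≠ 0 := ((Matrix.isUnit_iff_isUnit_det _).1 hu).ne_zero
  intro h0
  apply hd
  have := (RingHom.map_det (Int.castRingHom ℚ) (rowsMat F)).symm
  rw [RingHom.mapMatrix_apply] at this
  rw [hA, this, h0, map_zero]

lemma coloring_YS : Coloring (fun y : YS (VV g ++ VV g) => mt (y : Sp g)) := by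
  intro p q hpq
  have step : ∀ r : YS (VV g ++ VV g) → Prop,
      (∃ f : Fin (2 * g) × Fin (2 * g) → YS (VV g ++ VV g),
        (rowsMat fun j => mt (f j : Sp g)).det ≠ 0 ∧ ∀ j, r (f j)) ∨
      ∃ l : MQ g →ₗ[ℚ] ℚ, (∃ y ∈ YS (VV g ++ VV g), l (mq (mt y)) ≠ 0) ∧
        ∀ y, r y → l (mq (mt (y : Sp g))) = 0 := by
    intro r
    set s : Set (Matrix (Fin (2 * g)) (Fin (2 * g)) ℤ) :=
      (fun y : YS (VV g ++ VV g) => mt (y : Sp g)) '' {y | r y} with hs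
    by_cases h : Submodule.span ℚ (Set.image mq s) = ⊤
    · left
      obtain ⟨f, hf1, hf2⟩ := tuple_of_span s h
      choose F hF1 hF2 using hf1
      refine ⟨F, ?_, hF1⟩
      have : (fun j => mt (F j : Sp g)) = f := funext hF2
      rw [this]; exact hf2
    · right
      obtain ⟨l, hl, hker⟩ := Submodule.exists_le_ker_of_lt_top _ (lt_top_iff_ne_top.2 h)
      refine ⟨l, ?_, fun y hy => ?_⟩
      · by_contra hno
        push Not at hno
        exact hl (Van_zero hno)
      · have : mq (mt (y : Sp g)) ∈ Submodule.span ℚ (Set.image mq s) :=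
          Submodule.subset_span ⟨_, ⟨y, hy, rfl⟩, rfl⟩
        exact hker this
  rcases step p with ⟨f, h1, h2⟩ | ⟨l1, h1, k1⟩
  · exact ⟨f, h1, Or.inl h2⟩
  rcases step q with ⟨f, h1, h2⟩ | ⟨l2, h2, k2⟩
  · exact ⟨f, h1, Or.inr h2⟩
  exfalso
  obtain ⟨y, hy, n1, n2⟩ := irr _ l1 l2 h1 h2
  rcases hpq ⟨y, hy⟩ with h | h
  · exact n1 (k1 _ h)
  · exact n2 (k2 _ h)

end fam
end UG

namespace UG
section assembly
open Matrix

/-- reduction modulo `M` -/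
noncomputable def redHom (g M : ℕ) : Sp g →* GL (Fin (2 * g)) (ZMod M) :=
  (Matrix.GeneralLinearGroup.map (Int.castRingHom (ZMod M))).comp (Sp g).subtype

lemma redHom_entry {g M : ℕ} {s t : Sp g} (h : redHom g M s = redHom g M t) (i j : Fin (2 * g)) :
    ((mt s i j : ℤ) : ZMod M) = ((mt t i j : ℤ) : ZMod M) := by
  have := congrArg (fun u : GL (Fin (2 * g)) (ZMod M) =>
    (u : Matrix (Fin (2 * g)) (Fin (2 * g)) (ZMod M)) i j) h
  simpa [redHom, mt] using this

lemma det_rowsMat_cast {g M : ℕ} {w z : Fin (2 * g) × Fin (2 * g) → Sp g}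
    (h : ∀ j, redHom g M (w j) = redHom g M (z j)) :
    (((rowsMat fun j => mt (w j)).det : ℤ) : ZMod M) =
      (((rowsMat fun j => mt (z j)).det : ℤ) : ZMod M) := by
  have e := RingHom.map_det (Int.castRingHom (ZMod M)) (rowsMat fun j => mt (w j))
  have e' := RingHom.map_det (Int.castRingHom (ZMod M)) (rowsMat fun j => mt (z j))
  simp only [eq_intCast] at e e'
  rw [e, e']
  congr 1
  ext j p
  simpa [rowsMat] using redHom_entry (h j) p.1 p.2

lemma trace_cast {g M : ℕ} {s t : Sp g} (h : redHom g M s = redHom g M t) :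
    (((mt s).trace : ℤ) : ZMod M) = (((mt t).trace : ℤ) : ZMod M) := by
  simp only [Matrix.trace, Matrix.diag, Int.cast_sum]
  exact Finset.sum_congr rfl fun i _ => redHom_entry h i i

lemma norm_det_mt {g : ℕ} (s : Sp g) : ‖(cx (mt s)).det‖ = 1 := by
  rw [cx_det, Complex.norm_intCast]
  have hu : IsUnit (mt s).det :=
    (Matrix.isUnit_iff_isUnit_det _).1 (s : GL (Fin (2 * g)) ℤ).isUnit
  have := Int.isUnit_iff_abs_eq.1 hu
  exact_mod_cast this

lemma mulVec_ne {g : ℕ} (s : Sp g) {x : Fin (2 * g) → ℂ} (hx : x ≠ 0) : cx (mt s) *ᵥ x ≠ 0 := by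
  intro h
  apply hx
  have e : cx (mt s⁻¹) * cx (mt s) = 1 := by
    rw [← cx_mul, ← mt_mul, inv_mul_cancel, mt_one, cx_one]
  rw [← Matrix.one_mulVec x, ← e, ← Matrix.mulVec_mulVec, h, Matrix.mulVec_zero]

theorem uniform_bound {G : Type*} [Group G] (g : ℕ) (hg : 1 ≤ g)
    (ρ : G →* Sp g) (hρ : Function.Surjective ρ) :
    ∃ C : ℕ, 1 ≤ C ∧ ∀ S : Finset G, Subgroup.closure (S : Set G) = ⊤ →
      (2 : ℝ) ^ ((C : ℝ)⁻¹) ≤ growthRate (S : Set G) := by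
  classical
  have : Nonempty (Fin (2 * g)) := ⟨⟨0, by omega⟩⟩
  let i0 : Fin (2 * g) := ⟨0, by omega⟩
  letI : Fintype (YS (VV g ++ VV g)) := (YS_finite _).fintype
  set Y := YS (VV g ++ VV g) with hY
  set M : ℕ := 2 * (2 * g) + 2 + ∑ f : Fin (2 * g) × Fin (2 * g) → Y,
    (rowsMat fun j => mt (f j : Sp g)).det.natAbs with hM
  have hMpos : 0 < M := by omega
  have : NeZero M := ⟨hMpos.ne'⟩
  letI : Fintype (GL (Fin (2 * g)) (ZMod M)) := Fintype.ofFinite _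
  set k := Fintype.card (GL (Fin (2 * g)) (ZMod M)) with hk
  have hk1 : 1 ≤ k := Fintype.card_pos
  obtain ⟨L, hL1, hL⟩ := exists_exponent (2 * g) (Fintype.card (Fin (2 * g) × Fin (2 * g)))
    (by omega)
  refine ⟨k + 2 * Fintype.card Y * (L * (4 * k)), by omega, fun S hS => ?_⟩
  refine growthRate_ge hS S.finite_toSet _ (by omega) ?_
  -- short representatives
  have short : ∀ t : Sp g, ∃ y ∈ WB (S : Set G) k, redHom g M (ρ y) = redHom g M t := by
    intro t
    obtain ⟨x, rfl⟩ := hρ t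
    obtain ⟨y, hy, h⟩ := exists_short hS ((redHom g M).comp ρ) x
    exact ⟨y, hy, h⟩
  choose y hyk hyr using fun i : Y => short (i : Sp g)
  obtain ⟨h0, hh0, hh0r⟩ := short (tv (eb i0) * (tv (eb (pr i0)))⁻¹)
  set w : Y → Matrix (Fin (2 * g)) (Fin (2 * g)) ℤ := fun i => mt (ρ (y i)) with hw
  have hcol : Coloring w := by
    intro p q hpq
    obtain ⟨f, hf, h⟩ := coloring_YS (g := g) p q hpq
    refine ⟨f, fun h0 => hf ?_, h⟩
    have e := det_rowsMat_cast (M := M) (w := fun j => ρ (y (f j))) (z := fun j => (f j : Sp g))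
      (fun j => hyr (f j))
    rw [show (rowsMat fun j => mt (ρ (y (f j)))).det = 0 from h0, Int.cast_zero] at e
    have hdvd := (ZMod.intCast_zmod_eq_zero_iff_dvd _ M).1 e.symm
    refine Int.eq_zero_of_abs_lt_dvd hdvd ?_
    have hle : (rowsMat fun j => mt (f j : Sp g)).det.natAbs ≤
        ∑ f : Fin (2 * g) × Fin (2 * g) → Y, (rowsMat fun j => mt (f j : Sp g)).det.natAbs :=
      Finset.single_le_sum (f := fun f : Fin (2 * g) × Fin (2 * g) → Y =>
        (rowsMat fun j => mt (f j : Sp g)).det.natAbs) (fun _ _ => Nat.zero_le _)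
        (Finset.mem_univ f)
    change |(rowsMat fun j => mt (f j : Sp g)).det| < _
    rw [Int.abs_eq_natAbs]
    omega
  have htr : (2 * (g : ℤ)) + 1 ≤ |(mt (ρ h0)).trace| := by
    have e := trace_cast hh0r
    rw [trace_a0, ← sub_eq_zero, ← Int.cast_sub] at e
    have hdvd := (ZMod.intCast_zmod_eq_zero_iff_dvd _ M).1 e
    by_contra hlt
    have h1 : (mt (ρ h0)).trace - (2 * (g : ℤ) + 1) = 0 := by
      refine Int.eq_zero_of_abs_lt_dvd hdvd ?_
      rw [hM]
      push_cast
      have : (0 : ℤ) ≤ ∑ f : Fin (2 * g) × Fin (2 * g) → Y,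
        |(rowsMat fun j => mt (f j : Sp g)).det| := Finset.sum_nonneg fun _ _ => abs_nonneg _
      have h2 := abs_sub (mt (ρ h0)).trace (2 * (g : ℤ) + 1)
      have h3 : |2 * (g : ℤ) + 1| = 2 * g + 1 := abs_of_nonneg (by positivity)
      omega
    have h4 : (mt (ρ h0)).trace = 2 * (g : ℤ) + 1 := by omega
    rw [h4, abs_of_nonneg (by positivity)] at hlt
    exact hlt le_rfl
  have hwk4 : WB (S : Set G) k ⊆ WB (S : Set G) (4 * k) := WB_mono (by omega)
  obtain ⟨a, haF, R, hR, hRtr, φ, ψ, l, m, hφ, hψ, hφa, hψa, hlR, hm1⟩ :=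
    choose_a (ι := Fin (2 * g)) (WB (S : Set G) (4 * k)) (WB_finite S.finite_toSet _)
      (fun h => mt (ρ h)) (fun h _ => norm_det_mt _) h0 (hwk4 hh0) (by
        rw [cx_trace, Complex.norm_intCast, Fintype.card_fin]
        have : ((2 * (g : ℤ) + 1 : ℤ) : ℝ) ≤ ((|(mt (ρ h0)).trace| : ℤ) : ℝ) := by
          exact_mod_cast htr
        push_cast at this ⊢
        exact this)
  rw [Fintype.card_fin] at hR
  simp only [Fintype.card_fin] at hRtr
  set B : ℝ := ((2 * g : ℕ) : ℝ) * R with hB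
  have hB1 : 1 ≤ B := by
    have : (0 : ℝ) ≤ ((2 * g : ℕ) : ℝ) := Nat.cast_nonneg _
    linarith
  have hB2 : ∀ i j, ‖(cx (w i) * cx (w j)).trace‖ ≤ B := by
    intro i j
    have := hRtr (y i * y j) (WB_mono (by omega) (mul_mem_WB (hyk i) (hyk j)))
    rwa [map_mul, mt_mul, cx_mul] at this
  have hB4 : ∀ a i j b, ‖(cx (w a) * (cx (w i) * cx (w j) * cx (w b))).trace‖ ≤ B := by
    intro a i j b
    have := hRtr (y a * (y i * y j * y b)) (WB_mono (by omega)
      (mul_mem_WB (hyk a) (mul_mem_WB (mul_mem_WB (hyk i) (hyk j)) (hyk b))))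
    rwa [map_mul, mt_mul, cx_mul, map_mul, mt_mul, cx_mul, map_mul, mt_mul, cx_mul] at this
  set x0 : Fin (2 * g) → ℂ := Pi.single i0 1 with hx0
  have hx0ne : x0 ≠ 0 := by
    intro h
    have := congrFun h i0
    simp [hx0] at this
  set E := EE (Fintype.card (Fin (2 * g) × Fin (2 * g))) B with hE
  have hE0 : 0 ≤ E := by
    rw [hE, EE_eq]; positivity
  obtain ⟨f0, hf0, -⟩ := hcol (fun _ => True) (fun _ => True) (fun _ => Or.inl trivial)
  have hP := Phi_pos w B hB1 hB2 f0 hf0 φ x0 hφ hx0ne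
  have hQ := Phi_pos w B hB1 hB2 f0 hf0 ψ x0 hψ hx0ne
  set P := Phi w φ x0
  set Q := Phi w ψ x0
  intro n
  refine doubling S.finite_toSet k (L * (4 * k)) y (a ^ L)
    {x | 0 < ‖ψ ⬝ᵥ (cx (mt (ρ x)) *ᵥ x0)‖ ∧
      P * ‖ψ ⬝ᵥ (cx (mt (ρ x)) *ᵥ x0)‖ ≤ E * (Q * ‖φ ⬝ᵥ (cx (mt (ρ x)) *ᵥ x0)‖) ∧
      Q * ‖φ ⬝ᵥ (cx (mt (ρ x)) *ᵥ x0)‖ ≤ E * (P * ‖ψ ⬝ᵥ (cx (mt (ρ x)) *ᵥ x0)‖)}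
    hyk (pow_mem_WB haF L) ?_ ?_ n
  · intro x
    obtain ⟨i, h1, h2, h3⟩ := cover w B hB1 hB2 hB4 hcol φ ψ x0 (cx (mt (ρ x)) *ᵥ x0) hφ hψ hx0ne
      (mulVec_ne _ hx0ne)
    have e : cx (mt (ρ (y i * x))) *ᵥ x0 = cx (w i) *ᵥ (cx (mt (ρ x)) *ᵥ x0) := by
      rw [map_mul, mt_mul, cx_mul, Matrix.mulVec_mulVec]
    refine ⟨i, ?_⟩
    change _ ∧ _ ∧ _
    rw [e]
    exact ⟨h1, h2, h3⟩
  · rintro j hj x ⟨h1, h2, h3⟩ ⟨h4, h5, h6⟩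
    have epow : ∀ r : ℕ, cx (mt (ρ (a ^ r))) = cx (mt (ρ a)) ^ r := by
      intro r
      induction r with
      | zero => rw [pow_zero, pow_zero, map_one, mt_one, cx_one]
      | succ r ih => rw [pow_succ, pow_succ, map_mul, mt_mul, cx_mul, ih]
    have e : cx (mt (ρ ((a ^ L) ^ j * x))) *ᵥ x0 =
        (cx (mt (ρ a)) ^ (L * j)) *ᵥ (cx (mt (ρ x)) *ᵥ x0) := by
      rw [← pow_mul, map_mul, mt_mul, cx_mul, epow, Matrix.mulVec_mulVec]
    rw [e] at h6
    refine disjoint_pow (cx (mt (ρ a))) φ ψ (cx (mt (ρ x)) *ᵥ x0) l m hφa hψa hm1 P Q E hP hQ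
      (L * j) ?_ h1 h2 hE0 h6
    rw [hlR]
    exact hL R hR (L * j) (Nat.le_mul_of_pos_right L hj)

end assembly
end UG

/-- a finitely generated group surjecting onto `Sp(2g,ℤ)`, `g ≥ 1`, has
uniformly exponential growth. -/
theorem uniform_growth_of_surjection_onto_sp {G : Type*} [Group G]
    (hG : Group.FG G) (g : ℕ) (hg : 1 ≤ g)
    (ρ : G →* Sp g) (hρ : Function.Surjective ρ) :
    1 < minGrowth G := by
  obtain ⟨C, hC, h⟩ := UG.uniform_bound g hg ρ hρ
  have h1 : (1 : ℝ) < (2 : ℝ) ^ ((C : ℝ)⁻¹) :=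
    Real.one_lt_rpow (by norm_num) (by positivity)
  refine h1.trans_le ?_
  obtain ⟨S0, hS0⟩ := Group.fg_def.1 hG
  refine le_csInf ⟨growthRate (S0 : Set G), S0, hS0, rfl⟩ ?_
  rintro x ⟨S, hS, rfl⟩
  exact h S hS
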